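/- arXiv:1605.03266 — 4 statements merged into one kernel-verified Lean document; each statement's English description precedes it below -/
import Mathlib

section
/- Let n be a positive natural number and let s be the outmap of a unique sink orientation (USO) of the n-dimensional hypercube. Then for every set of directions Λ ⊆ Fin n (as a Finset), the map s' defined by s'(v) = Λ Δ s(v) is again the outmap of a unique sink orientation of the n-dimensional hypercube. -/
/-- An outmap `s` is the outmap of an orientation of the `n`-cube if for every
vertex `v` and every direction `lam`, the `lam`-edge at `v` is outgoing at `v`
iff it is incoming at the neighbor `v Δ {lam}`. -/
def IsOrientation (n : ℕ) (s : Finset (Fin n) → Finset (Fin n)) : Prop :=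
  ∀ (v : Finset (Fin n)) (lam : Fin n), lam ∈ s v ↔ lam ∉ s (symmDiff v {lam})

/-- An outmap `s` is a unique sink orientation (USO) of the `n`-cube if it is
the outmap of an orientation and every subcube `[u : w]` has a unique sink. -/
def IsUSO (n : ℕ) (s : Finset (Fin n) → Finset (Fin n)) : Prop :=
  IsOrientation n s ∧
    ∀ u w : Finset (Fin n), u ⊆ w →
      ∃! x : Finset (Fin n), u ⊆ x ∧ x ⊆ w ∧ s x ∩ (w \ u) = ∅

/-!
Unique sinks force much more: in a subcube with direction set `D = w \ u`, every `Λ ⊆ D` is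
attained exactly once as an outset `s x ∩ D`. Induct on `Λ`. To pass from `Λ` to `insert l Λ`, count
the vertices whose outset in the directions `D \ {l}` is `Λ`. There is one in each of the two facets
orthogonal to `l`, so two in all; exactly one vertex has outset `Λ` in `D`, hence exactly one has
outset `insert l Λ`. Finally, the sinks after flipping the directions in `Λ` are the vertices that
had outset `Λ ∩ D`.
-/

open Finset
open scoped symmDiff

section UniqueSinks

variable {α : Type*} [DecidableEq α] {s : Finset α → Finset α} {u v w Λ : Finset α} {l : α}

/-- The vertices of the subcube `[u, w]` whose outgoing edges within the subcube are those in the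
directions `Λ`. The sinks of the subcube are the case `Λ = ∅`. -/
def verticesWithOutset (s : Finset α → Finset α) (u w Λ : Finset α) : Finset (Finset α) :=
  {x ∈ Icc u w | s x ∩ (w \ u) = Λ}

/-- The unique sink property for outmaps on the finite subsets of an arbitrary type of directions.
Being an orientation is not part of the definition: it is the case of one-dimensional subcubes. -/
def HasUniqueSinks (s : Finset α → Finset α) : Prop :=
  ∀ u w, u ⊆ w → #(verticesWithOutset s u w ∅) = 1

theorem mem_verticesWithOutset {x : Finset α} :
    x ∈ verticesWithOutset s u w Λ ↔ u ⊆ x ∧ x ⊆ w ∧ s x ∩ (w \ u) = Λ := by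
  simp only [verticesWithOutset, mem_filter, mem_Icc, and_assoc]

theorem card_verticesWithOutset_eq_one_iff :
    #(verticesWithOutset s u w Λ) = 1 ↔ ∃! x, u ⊆ x ∧ x ⊆ w ∧ s x ∩ (w \ u) = Λ := by
  simp only [card_eq_one, singleton_iff_unique_mem, mem_verticesWithOutset]

theorem card_verticesWithOutset_facets (s : Finset α → Finset α) (u w Λ : Finset α) (l : α) :
    #(verticesWithOutset s u (w.erase l) Λ) + #(verticesWithOutset s (insert l u) w Λ) =
      #{x ∈ Icc u w | s x ∩ (w \ u).erase l = Λ} := by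
  have lower : {x ∈ {x ∈ Icc u w | s x ∩ (w \ u).erase l = Λ} | l ∉ x} =
      verticesWithOutset s u (w.erase l) Λ := by
    ext x
    simp only [mem_verticesWithOutset, mem_filter, mem_Icc, subset_erase, erase_sdiff_comm]
    tauto
  have upper : {x ∈ {x ∈ Icc u w | s x ∩ (w \ u).erase l = Λ} | ¬ l ∉ x} =
      verticesWithOutset s (insert l u) w Λ := by
    ext x
    simp only [mem_verticesWithOutset, mem_filter, mem_Icc, insert_subset_iff, sdiff_insert,
      not_not]
    tauto
  rw [← lower, ← upper, card_filter_add_card_filter_not]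

theorem card_verticesWithOutset_add_insert (hl : l ∈ w \ u) (hlΛ : l ∉ Λ) :
    #(verticesWithOutset s u w Λ) + #(verticesWithOutset s u w (insert l Λ)) =
      #{x ∈ Icc u w | s x ∩ (w \ u).erase l = Λ} := by
  have incoming : {x ∈ {x ∈ Icc u w | s x ∩ (w \ u).erase l = Λ} | l ∉ s x} =
      verticesWithOutset s u w Λ := by
    ext x
    simp only [verticesWithOutset, mem_filter]
    grind
  have outgoing : {x ∈ {x ∈ Icc u w | s x ∩ (w \ u).erase l = Λ} | ¬ l ∉ s x} =
      verticesWithOutset s u w (insert l Λ) := by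
    ext x
    have outset_eq_insert_iff :
        s x ∩ (w \ u) = insert l Λ ↔ s x ∩ (w \ u).erase l = Λ ∧ l ∈ s x := by
      rw [inter_erase]
      grind [erase_insert, insert_erase]
    simp only [verticesWithOutset, mem_filter, outset_eq_insert_iff, not_not, and_assoc]
  rw [← incoming, ← outgoing, card_filter_add_card_filter_not]

theorem verticesWithOutset_symmDiff_empty (s : Finset α → Finset α) (u w Λ : Finset α) :
    verticesWithOutset (fun v => Λ ∆ s v) u w ∅ = verticesWithOutset s u w (Λ ∩ (w \ u)) := by
  ext x
  have sink_iff : (Λ ∆ s x) ∩ (w \ u) = ∅ ↔ s x ∩ (w \ u) = Λ ∩ (w \ u) := by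
    rw [← inf_eq_inter, inf_symmDiff_distrib_right, ← bot_eq_empty, symmDiff_eq_bot, eq_comm]
    rfl
  simp only [mem_verticesWithOutset, sink_iff]

namespace HasUniqueSinks

theorem card_verticesWithOutset (hs : HasUniqueSinks s) (huw : u ⊆ w) (hΛ : Λ ⊆ w \ u) :
    #(verticesWithOutset s u w Λ) = 1 := by
  induction Λ using Finset.induction_on generalizing u w with
  | empty => exact hs u w huw
  | insert l Λ hlΛ ih =>
    obtain ⟨hl, hΛ⟩ := insert_subset_iff.1 hΛ
    obtain ⟨hlw, hlu⟩ := mem_sdiff.1 hl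
    have hΛ_erase : Λ ⊆ (w \ u).erase l := subset_erase.2 ⟨hΛ, hlΛ⟩
    have lower : #(verticesWithOutset s u (w.erase l) Λ) = 1 :=
      ih (subset_erase.2 ⟨huw, hlu⟩) (by rwa [erase_sdiff_comm])
    have upper : #(verticesWithOutset s (insert l u) w Λ) = 1 :=
      ih (insert_subset hlw huw) (by rwa [sdiff_insert])
    have whole : #(verticesWithOutset s u w Λ) = 1 := ih huw hΛ
    have facets := card_verticesWithOutset_facets s u w Λ l
    have split := card_verticesWithOutset_add_insert (s := s) hl hlΛ
    lia

theorem mem_iff_notMem_insert (hs : HasUniqueSinks s) (hl : l ∉ v) :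
    l ∈ s v ↔ l ∉ s (insert l v) := by
  have Icc_edge : Icc v (insert l v) = {v, insert l v} := by
    ext x
    simp only [mem_Icc, mem_insert, mem_singleton]
    grind
  have unique_sink : #{x ∈ {v, insert l v} | l ∉ s x} = 1 := by
    have card_sinks := hs v (insert l v) (subset_insert l v)
    simpa only [verticesWithOutset, Icc_edge, insert_sdiff_cancel hl,
      ← disjoint_iff_inter_eq_empty, disjoint_singleton_right] using card_sinks
  rw [card_filter, sum_pair (ne_insert_of_notMem v v hl)] at unique_sink
  grind

theorem mem_iff_notMem_symmDiff (hs : HasUniqueSinks s) (v : Finset α) (l : α) :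
    l ∈ s v ↔ l ∉ s (v ∆ {l}) := by
  by_cases hl : l ∈ v
  · have neighbor_eq : v ∆ {l} = v.erase l := by grind [mem_symmDiff]
    have erase_iff := hs.mem_iff_notMem_insert (notMem_erase l v)
    rw [insert_erase hl] at erase_iff
    rw [neighbor_eq, erase_iff, not_not]
  · have neighbor_eq : v ∆ {l} = insert l v := by grind [mem_symmDiff]
    rw [neighbor_eq, hs.mem_iff_notMem_insert hl]

end HasUniqueSinks

theorem isUSO_iff_hasUniqueSinks {n : ℕ} {s : Finset (Fin n) → Finset (Fin n)} :
    IsUSO n s ↔ HasUniqueSinks s := by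
  constructor
  · exact fun hs u w huw => card_verticesWithOutset_eq_one_iff.2 (hs.2 u w huw)
  · exact fun hs => ⟨hs.mem_iff_notMem_symmDiff,
      fun u w huw => card_verticesWithOutset_eq_one_iff.1 (hs u w huw)⟩

theorem uso_flip_direction_set_general (hs : HasUniqueSinks s) (Λ : Finset α) :
    HasUniqueSinks (fun v => Λ ∆ s v) := by
  intro u w huw
  rw [verticesWithOutset_symmDiff_empty]
  exact hs.card_verticesWithOutset huw inter_subset_right

end UniqueSinks

/-- Reversing all edges in every direction of a set Λ of directions of a USO
yields again a USO. -/
theorem uso_flip_direction_set (n : ℕ) (hn : 0 < n)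
    (s : Finset (Fin n) → Finset (Fin n)) (hs : IsUSO n s)
    (Λ : Finset (Fin n)) :
    IsUSO n (fun v => symmDiff Λ (s v)) :=
  isUSO_iff_hasUniqueSinks.2 (uso_flip_direction_set_general (isUSO_iff_hasUniqueSinks.1 hs) Λ)
end

section
/- Let n be a positive natural number, let s be the outmap of a unique sink orientation (USO) of the n-dimensional hypercube, and let λ : Fin n be a single direction. Then the map s' defined by s'(v) = {λ} Δ s(v) (i.e., the orientation obtained from reversing all edges in direction λ) is again the outmap of a unique sink orientation of the n-dimensional hypercube. -/
/-!
Only faces `[u, w]` spanned in direction `lam` are affected by the reversal. Such a face splits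
into two opposite facets orthogonal to `lam`, each with a unique sink that the reversal preserves.
A sink of the whole face is a facet sink whose `lam`-edge is incoming. As the original face has a
unique sink, exactly one of the two facet sinks has its `lam`-edge incoming, so exactly one has it
outgoing, and that one is the unique sink after the reversal.
-/

theorem existsUnique_eq_or_eq_and_of_not {β : Type*} {a b : β} {p : β → Prop} (hab : a ≠ b)
    (h : ∃! z, (z = a ∨ z = b) ∧ ¬ p z) : ∃! z, (z = a ∨ z = b) ∧ p z := by
  obtain ⟨z, ⟨rfl | rfl, hz⟩, z_unique⟩ := h
  · have hb : p b := by_contra fun hb => hab (z_unique b ⟨.inr rfl, hb⟩).symm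
    exact ⟨b, ⟨.inr rfl, hb⟩, fun y hy => hy.1.resolve_left fun h => hz (h ▸ hy.2)⟩
  · have ha : p a := by_contra fun ha => hab (z_unique a ⟨.inl rfl, ha⟩)
    exact ⟨a, ⟨.inl rfl, ha⟩, fun y hy => hy.1.resolve_right fun h => hz (h ▸ hy.2)⟩

section CubeFaces

variable {α : Type*} [DecidableEq α]

/-- `x` is a sink of the face `[u, w]` of the cube with direction set `α`: it lies in that face
and the outmap `s` has no direction of the face, i.e. of `w \ u`, at `x`. -/
def IsFaceSink (s : Finset α → Finset α) (u w x : Finset α) : Prop :=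
  u ⊆ x ∧ x ⊆ w ∧ s x ∩ (w \ u) = ∅

/-- The outmap obtained from `s` by reversing all edges in direction `lam`. -/
def flipDirection (lam : α) (s : Finset α → Finset α) : Finset α → Finset α :=
  fun v => symmDiff {lam} (s v)

variable {lam : α} {s : Finset α → Finset α} {u w x : Finset α}

theorem mem_flipDirection_self : lam ∈ flipDirection lam s x ↔ lam ∉ s x := by
  simp [flipDirection, Finset.mem_symmDiff]

theorem mem_flipDirection_of_ne {i : α} (hi : i ≠ lam) :
    i ∈ flipDirection lam s x ↔ i ∈ s x := by
  simp [flipDirection, Finset.mem_symmDiff, hi]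

theorem isFaceSink_flipDirection_iff_of_notMem_sdiff (hlam : lam ∉ w \ u) :
    IsFaceSink (flipDirection lam s) u w x ↔ IsFaceSink s u w x := by
  have inter_eq : flipDirection lam s x ∩ (w \ u) = s x ∩ (w \ u) := by
    ext i
    simp only [Finset.mem_inter]
    exact and_congr_left fun hi => mem_flipDirection_of_ne (ne_of_mem_of_not_mem hi hlam)
  simp only [IsFaceSink, inter_eq]

theorem isFaceSink_iff_facet (hw : lam ∈ w) (hu : lam ∉ u) :
    IsFaceSink s u w x ↔
      (IsFaceSink s u (w.erase lam) x ∨ IsFaceSink s (insert lam u) w x) ∧ lam ∉ s x := by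
  have sdiff_eq : w \ u = insert lam (w \ insert lam u) := by grind
  have lower_sdiff_eq : w.erase lam \ u = w \ insert lam u := by grind
  have inter_eq_empty_iff :
      s x ∩ (w \ u) = ∅ ↔ s x ∩ (w \ insert lam u) = ∅ ∧ lam ∉ s x := by
    simp only [sdiff_eq, ← Finset.disjoint_iff_inter_eq_empty, Finset.disjoint_insert_right,
      and_comm]
  simp only [IsFaceSink, inter_eq_empty_iff, lower_sdiff_eq, Finset.subset_erase,
    Finset.insert_subset_iff]
  tauto

theorem isFaceSink_flipDirection_iff_facet (hw : lam ∈ w) (hu : lam ∉ u) :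
    IsFaceSink (flipDirection lam s) u w x ↔
      (IsFaceSink s u (w.erase lam) x ∨ IsFaceSink s (insert lam u) w x) ∧ lam ∈ s x := by
  rw [isFaceSink_iff_facet hw hu, mem_flipDirection_self, not_not,
    isFaceSink_flipDirection_iff_of_notMem_sdiff (by simp),
    isFaceSink_flipDirection_iff_of_notMem_sdiff (by simp)]

theorem existsUnique_isFaceSink_flipDirection_of_facets (hw : lam ∈ w) (hu : lam ∉ u)
    (face : ∃! x, IsFaceSink s u w x) (lower : ∃! x, IsFaceSink s u (w.erase lam) x)
    (upper : ∃! x, IsFaceSink s (insert lam u) w x) :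
    ∃! x, IsFaceSink (flipDirection lam s) u w x := by
  obtain ⟨a, ha, a_unique⟩ := lower
  obtain ⟨b, hb, b_unique⟩ := upper
  have lower_iff (x) : IsFaceSink s u (w.erase lam) x ↔ x = a :=
    ⟨a_unique x, fun h => h ▸ ha⟩
  have upper_iff (x) : IsFaceSink s (insert lam u) w x ↔ x = b :=
    ⟨b_unique x, fun h => h ▸ hb⟩
  have hab : a ≠ b := by
    rintro rfl
    exact Finset.notMem_erase lam w (ha.2.1 (hb.1 (Finset.mem_insert_self lam u)))
  simp only [isFaceSink_iff_facet hw hu, lower_iff, upper_iff] at face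
  simp only [isFaceSink_flipDirection_iff_facet hw hu, lower_iff, upper_iff]
  exact existsUnique_eq_or_eq_and_of_not hab face

theorem existsUnique_isFaceSink_flipDirection
    (hs : ∀ u w : Finset α, u ⊆ w → ∃! x, IsFaceSink s u w x) (huw : u ⊆ w) :
    ∃! x, IsFaceSink (flipDirection lam s) u w x := by
  by_cases hlam : lam ∈ w \ u
  · obtain ⟨hw, hu⟩ := Finset.mem_sdiff.mp hlam
    exact existsUnique_isFaceSink_flipDirection_of_facets hw hu (hs u w huw)
      (hs u (w.erase lam) (Finset.subset_erase.mpr ⟨huw, hu⟩))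
      (hs (insert lam u) w (Finset.insert_subset hw huw))
  · simpa only [isFaceSink_flipDirection_iff_of_notMem_sdiff hlam] using hs u w huw

end CubeFaces

theorem IsOrientation.flipDirection {n : ℕ} {s : Finset (Fin n) → Finset (Fin n)}
    (hs : IsOrientation n s) (lam : Fin n) : IsOrientation n (flipDirection lam s) := by
  intro v i
  by_cases hi : i = lam
  · subst hi
    simpa only [mem_flipDirection_self] using not_congr (hs v i)
  · simpa only [mem_flipDirection_of_ne hi] using hs v i

/-- Reversing all edges in a single direction lam of a USO yields again a USO. -/
theorem uso_flip_single_direction (n : ℕ) (hn : 0 < n)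
    (s : Finset (Fin n) → Finset (Fin n)) (hs : IsUSO n s)
    (lam : Fin n) :
    IsUSO n (fun v => symmDiff {lam} (s v)) := by
  exact ⟨hs.1.flipDirection lam, fun _ _ => existsUnique_isFaceSink_flipDirection hs.2⟩
end

section
/- Let n be a natural number and let s₁ and s₂ be outmaps of unique sink orientations (USOs) of the n-dimensional hypercube. Identify subsets of Fin n with subsets of Fin (n+1) not containing the last element Fin.last n, via the embedding Fin.castSucc. Define the combined outmap s on Finset (Fin (n+1)) by: if Fin.last n ∉ v then s(v) is the image under Fin.castSucc of s₁(v'), where v' is the preimage of v; if Fin.last n ∈ v then s(v) is the image under Fin.castSucc of s₂(v') together with the element Fin.last n, where v' is the preimage of v \ {Fin.last n}. Then s is the outmap of a unique sink orientation of the (n+1)-dimensional hypercube (this is the combination φ₁ ↑ φ₂ in which the lower (n+1)-facet carries s₁, the upper (n+1)-facet carries s₂, and all edges in direction n+1 are directed from the upper facet to the lower facet). -/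
/-- The combined outmap φ₁ ↑ φ₂: the lower (n+1)-facet carries s₁, the upper
(n+1)-facet carries s₂, and all edges in direction n+1 point from the upper
facet to the lower facet (they are outgoing at vertices containing Fin.last n). -/
noncomputable def combineUp (n : ℕ) (s₁ s₂ : Finset (Fin n) → Finset (Fin n)) :
    Finset (Fin (n + 1)) → Finset (Fin (n + 1)) := fun v =>
  if Fin.last n ∈ v then
    (s₂ ((v \ {Fin.last n}).preimage Fin.castSucc
        (Fin.castSucc_injective n).injOn)).image Fin.castSucc ∪ {Fin.last n}
  else
    (s₁ (v.preimage Fin.castSucc (Fin.castSucc_injective n).injOn)).image Fin.castSucc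

/-!
Write a vertex of the `(n + 1)`-cube as a vertex of the `n`-cube together with one bit, which says
whether it contains `Fin.last n`. In `combineUp n s₁ s₂` the last edge is outgoing exactly at the
vertices of the upper facet, so inside a subcube `[u : w]` a sink must have the same last bit as the
lower end `u`: if `u` is in the upper facet then so is the whole subcube, and if `u` is in the lower
facet then a vertex of the upper facet can still leave along its last edge. The sinks of `[u : w]`
are therefore the sinks of one subcube of the `n`-cube, for `s₂` or for `s₁` according to that bit.
-/

section DropLast

variable {n : ℕ}

/-- The projection of the `(n + 1)`-cube onto the `n`-cube that forgets the last coordinate: the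
preimage under `Fin.castSucc`, so that `Fin.last n` is discarded. -/
noncomputable def dropLast (v : Finset (Fin (n + 1))) : Finset (Fin n) :=
  v.preimage Fin.castSucc (Fin.castSucc_injective n).injOn

theorem mem_dropLast {v : Finset (Fin (n + 1))} {i : Fin n} :
    i ∈ dropLast v ↔ i.castSucc ∈ v :=
  Finset.mem_preimage

theorem subset_iff_dropLast {v w : Finset (Fin (n + 1))} :
    v ⊆ w ↔ dropLast v ⊆ dropLast w ∧ (Fin.last n ∈ v → Fin.last n ∈ w) := by
  simp only [Finset.subset_iff, mem_dropLast, Fin.forall_fin_succ']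

theorem eq_iff_dropLast {v w : Finset (Fin (n + 1))} :
    v = w ↔ dropLast v = dropLast w ∧ (Fin.last n ∈ v ↔ Fin.last n ∈ w) := by
  simp only [Finset.ext_iff, mem_dropLast, Fin.forall_fin_succ']

theorem eq_empty_iff_dropLast {v : Finset (Fin (n + 1))} :
    v = ∅ ↔ dropLast v = ∅ ∧ Fin.last n ∉ v := by
  simp only [Finset.eq_empty_iff_forall_notMem, mem_dropLast, Fin.forall_fin_succ']

theorem dropLast_inter (v w : Finset (Fin (n + 1))) :
    dropLast (v ∩ w) = dropLast v ∩ dropLast w := by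
  ext i
  simp only [mem_dropLast, Finset.mem_inter]

theorem dropLast_sdiff (v w : Finset (Fin (n + 1))) :
    dropLast (v \ w) = dropLast v \ dropLast w := by
  ext i
  simp only [mem_dropLast, Finset.mem_sdiff]

theorem dropLast_symmDiff (v w : Finset (Fin (n + 1))) :
    dropLast (symmDiff v w) = symmDiff (dropLast v) (dropLast w) := by
  ext i
  simp only [mem_dropLast, Finset.mem_symmDiff]

theorem dropLast_union (v w : Finset (Fin (n + 1))) :
    dropLast (v ∪ w) = dropLast v ∪ dropLast w := by
  ext i
  simp only [mem_dropLast, Finset.mem_union]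

theorem dropLast_image_castSucc (x : Finset (Fin n)) : dropLast (x.image Fin.castSucc) = x := by
  ext i
  simp [mem_dropLast]

theorem dropLast_singleton_castSucc (i : Fin n) : dropLast {i.castSucc} = {i} := by
  ext j
  simp [mem_dropLast]

theorem dropLast_singleton_last : dropLast {Fin.last n} = ∅ := by
  ext i
  simp [mem_dropLast]

theorem exists_dropLast_eq_and_last_mem_iff (x : Finset (Fin n)) (p : Prop) :
    ∃ v : Finset (Fin (n + 1)), dropLast v = x ∧ (Fin.last n ∈ v ↔ p) := by
  by_cases hp : p
  · refine ⟨x.image Fin.castSucc ∪ {Fin.last n}, ?_, by simp [hp]⟩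
    rw [dropLast_union, dropLast_image_castSucc, dropLast_singleton_last, Finset.union_empty]
  · exact ⟨x.image Fin.castSucc, dropLast_image_castSucc x, by simp [hp]⟩

theorem existsUnique_last_mem_iff_and_dropLast {P : Finset (Fin n) → Prop} (p : Prop)
    (hP : ∃! x, P x) :
    ∃! v : Finset (Fin (n + 1)), (Fin.last n ∈ v ↔ p) ∧ P (dropLast v) := by
  obtain ⟨x, hx, x_unique⟩ := hP
  obtain ⟨v, rfl, hv⟩ := exists_dropLast_eq_and_last_mem_iff x p
  refine ⟨v, ⟨hv, hx⟩, fun y ⟨hy, hPy⟩ => ?_⟩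
  exact eq_iff_dropLast.2 ⟨x_unique _ hPy, hy.trans hv.symm⟩

end DropLast

/-- `x` is a sink of the subcube `[u : w]`: it lies in the subcube, and none of the directions
spanning the subcube is outgoing at `x`. -/
def IsSubcubeSink {n : ℕ} (s : Finset (Fin n) → Finset (Fin n)) (u w x : Finset (Fin n)) : Prop :=
  u ⊆ x ∧ x ⊆ w ∧ s x ∩ (w \ u) = ∅

section CombineUp

variable {n : ℕ} {s₁ s₂ : Finset (Fin n) → Finset (Fin n)}

theorem last_mem_combineUp {v : Finset (Fin (n + 1))} :
    Fin.last n ∈ combineUp n s₁ s₂ v ↔ Fin.last n ∈ v := by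
  by_cases hv : Fin.last n ∈ v <;> simp [combineUp, hv]

theorem dropLast_combineUp (v : Finset (Fin (n + 1))) :
    dropLast (combineUp n s₁ s₂ v) = (if Fin.last n ∈ v then s₂ else s₁) (dropLast v) := by
  by_cases hv : Fin.last n ∈ v
  · have dropLast_erase : dropLast (v \ {Fin.last n}) = dropLast v := by
      rw [dropLast_sdiff, dropLast_singleton_last, Finset.sdiff_empty]
    rw [combineUp, if_pos hv, if_pos hv, dropLast_union, dropLast_image_castSucc,
      dropLast_singleton_last, Finset.union_empty, ← dropLast, dropLast_erase]
  · rw [combineUp, if_neg hv, if_neg hv, dropLast_image_castSucc, ← dropLast]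

theorem last_mem_iff_of_isSubcubeSink_combineUp {u w v : Finset (Fin (n + 1))}
    (hv : IsSubcubeSink (combineUp n s₁ s₂) u w v) : Fin.last n ∈ v ↔ Fin.last n ∈ u := by
  obtain ⟨huv, hvw, no_outgoing⟩ := hv
  refine ⟨fun last_mem => ?_, fun last_mem => huv last_mem⟩
  by_contra last_notMem
  have last_outgoing : Fin.last n ∈ combineUp n s₁ s₂ v ∩ (w \ u) :=
    Finset.mem_inter.2 ⟨last_mem_combineUp.2 last_mem,
      Finset.mem_sdiff.2 ⟨hvw last_mem, last_notMem⟩⟩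
  exact Finset.eq_empty_iff_forall_notMem.1 no_outgoing _ last_outgoing

theorem isSubcubeSink_combineUp_iff {u w : Finset (Fin (n + 1))} (huw : u ⊆ w)
    (v : Finset (Fin (n + 1))) :
    IsSubcubeSink (combineUp n s₁ s₂) u w v ↔
      (Fin.last n ∈ v ↔ Fin.last n ∈ u) ∧
        IsSubcubeSink (if Fin.last n ∈ u then s₂ else s₁)
          (dropLast u) (dropLast w) (dropLast v) := by
  rw [← and_iff_right_of_imp (last_mem_iff_of_isSubcubeSink_combineUp (v := v))]
  refine and_congr_right fun last_mem_iff => ?_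
  have last_mem_of_mem : Fin.last n ∈ u → Fin.last n ∈ w := fun last_mem => huw last_mem
  simp only [IsSubcubeSink, subset_iff_dropLast, eq_empty_iff_dropLast, dropLast_inter,
    dropLast_sdiff, dropLast_combineUp, Finset.mem_inter, Finset.mem_sdiff, last_mem_combineUp,
    last_mem_iff]
  tauto

theorem combineUp_isOrientation (h₁ : IsOrientation n s₁) (h₂ : IsOrientation n s₂) :
    IsOrientation (n + 1) (combineUp n s₁ s₂) := by
  intro v i
  induction i using Fin.lastCases with
  | last => simp [last_mem_combineUp, Finset.mem_symmDiff]
  | cast i =>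
    have last_mem_neighbor : Fin.last n ∈ symmDiff v {i.castSucc} ↔ Fin.last n ∈ v := by
      simp [Finset.mem_symmDiff, (Fin.castSucc_ne_last i).symm]
    have facet_isOrientation : IsOrientation n (if Fin.last n ∈ v then s₂ else s₁) := by
      split_ifs <;> assumption
    simp only [← mem_dropLast, dropLast_combineUp, dropLast_symmDiff, dropLast_singleton_castSucc,
      last_mem_neighbor]
    exact facet_isOrientation (dropLast v) i

end CombineUp

/-- Combining two USOs of the n-cube as the two (n+1)-facets of an (n+1)-cube,
with all edges in the new direction oriented from the upper facet to the lower
facet, yields a USO of the (n+1)-cube. -/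
theorem combineUp_isUSO (n : ℕ)
    (s₁ s₂ : Finset (Fin n) → Finset (Fin n))
    (h₁ : IsUSO n s₁) (h₂ : IsUSO n s₂) :
    IsUSO (n + 1) (combineUp n s₁ s₂) := by
  refine ⟨combineUp_isOrientation h₁.1 h₂.1, fun u w huw => ?_⟩
  have facet_isUSO : IsUSO n (if Fin.last n ∈ u then s₂ else s₁) := by
    split_ifs <;> assumption
  have facet_sink : ∃! x, IsSubcubeSink (if Fin.last n ∈ u then s₂ else s₁)
      (dropLast u) (dropLast w) x :=
    facet_isUSO.2 _ _ (subset_iff_dropLast.1 huw).1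
  exact (existsUnique_congr (isSubcubeSink_combineUp_iff huw)).2
    (existsUnique_last_mem_iff_and_dropLast _ facet_sink)
end

section
/- For every n ≥ 1 and every k ≥ 1, the iterates of the recursively defined outmaps s_n starting at the empty set satisfy: s_{n+1}^[2k-1](∅) = (image under Fin.castSucc of s_n^[k](∅)) ∪ {Fin.last n} and s_{n+1}^[2k](∅) = image under Fin.castSucc of s_n^[k](∅). -/
/-- The recursion step from dimension n to dimension n+1: on the lower facet
(vertices not containing Fin.last n) use the outmap s together with the
outgoing new direction Fin.last n; on the upper facet (vertices containing
Fin.last n) all edges point downward, so the outmap is v \ {Fin.last n}. -/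
noncomputable def stepOutmap (n : ℕ) (s : Finset (Fin n) → Finset (Fin n)) :
    Finset (Fin (n + 1)) → Finset (Fin (n + 1)) := fun v =>
  if Fin.last n ∈ v then v \ {Fin.last n}
  else
    (s (v.preimage Fin.castSucc (Fin.castSucc_injective n).injOn)).image Fin.castSucc ∪
      {Fin.last n}

/-- The recursively defined family of outmaps s_n: for n = 1 the single edge
points from ∅ to {0}; s_{n+1} is obtained from s_n by the recursion step.
(The value at n = 0 is irrelevant.) -/
noncomputable def recOutmap : (n : ℕ) → Finset (Fin n) → Finset (Fin n)
  | 0 => fun _ => ∅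
  | 1 => fun v => if (0 : Fin 1) ∈ v then ∅ else {0}
  | (n + 2) => stepOutmap (n + 1) (recOutmap (n + 1))

section stepOutmap

variable {n : ℕ} (s : Finset (Fin n) → Finset (Fin n))

theorem last_notMem_image_castSucc (w : Finset (Fin n)) :
    Fin.last n ∉ w.image Fin.castSucc := by
  simp

theorem stepOutmap_image_castSucc (w : Finset (Fin n)) :
    stepOutmap n s (w.image Fin.castSucc) = (s w).image Fin.castSucc ∪ {Fin.last n} := by
  have preimage_image : (w.image Fin.castSucc).preimage Fin.castSucc
      (Fin.castSucc_injective n).injOn = w := by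
    ext i
    simp
  rw [stepOutmap, if_neg (last_notMem_image_castSucc w), preimage_image]

theorem stepOutmap_image_castSucc_union_last (w : Finset (Fin n)) :
    stepOutmap n s (w.image Fin.castSucc ∪ {Fin.last n}) = w.image Fin.castSucc := by
  have last_mem : Fin.last n ∈ w.image Fin.castSucc ∪ {Fin.last n} := by simp
  rw [stepOutmap, if_pos last_mem]
  exact Finset.union_sdiff_cancel_right
    (Finset.disjoint_singleton_right.mpr (last_notMem_image_castSucc w))

theorem semiconj_image_castSucc_stepOutmap_iterate_two :
    Function.Semiconj (Finset.image Fin.castSucc) s (stepOutmap n s)^[2] := fun w => by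
  rw [Function.iterate_succ_apply, Function.iterate_one, stepOutmap_image_castSucc,
    stepOutmap_image_castSucc_union_last]

theorem stepOutmap_iterate_two_mul_image_castSucc (k : ℕ) (w : Finset (Fin n)) :
    (stepOutmap n s)^[2 * k] (w.image Fin.castSucc) = (s^[k] w).image Fin.castSucc := by
  rw [Function.iterate_mul]
  exact ((semiconj_image_castSucc_stepOutmap_iterate_two s).iterate_right k w).symm

theorem stepOutmap_iterate_two_mul_add_one_image_castSucc (k : ℕ) (w : Finset (Fin n)) :
    (stepOutmap n s)^[2 * k + 1] (w.image Fin.castSucc) =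
      (s^[k + 1] w).image Fin.castSucc ∪ {Fin.last n} := by
  rw [Function.iterate_succ_apply', stepOutmap_iterate_two_mul_image_castSucc,
    stepOutmap_image_castSucc, ← Function.iterate_succ_apply' s]

end stepOutmap

theorem recOutmap_succ (n : ℕ) : recOutmap (n + 1) = stepOutmap n (recOutmap n) := by
  cases n with
  | zero =>
    funext v
    obtain rfl | rfl : v = ∅ ∨ v = {0} := by
      simpa using Finset.subset_singleton_iff.mp (Finset.subset_univ v)
    all_goals simp [recOutmap, stepOutmap]
  | succ m => rfl

/-- The iterates of s_{n+1} starting at ∅ track the iterates of s_n at half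
speed: the (2k-1)-st iterate is the k-th iterate of s_n (lifted to the upper
facet) and the (2k)-th iterate is the k-th iterate of s_n (in the lower facet). -/
theorem recOutmap_iterate_doubling (n k : ℕ) (hn : 1 ≤ n) (hk : 1 ≤ k) :
    (recOutmap (n + 1))^[2 * k - 1] ∅ =
        ((recOutmap n)^[k] ∅).image Fin.castSucc ∪ {Fin.last n} ∧
    (recOutmap (n + 1))^[2 * k] ∅ = ((recOutmap n)^[k] ∅).image Fin.castSucc := by
  obtain ⟨j, rfl⟩ := Nat.exists_eq_add_of_le' hk
  rw [recOutmap_succ, ← Finset.image_empty Fin.castSucc]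
  exact ⟨stepOutmap_iterate_two_mul_add_one_image_castSucc _ j ∅,
    stepOutmap_iterate_two_mul_image_castSucc _ (j + 1) ∅⟩
end
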